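/- arXiv:1202.2269 — 3 statements merged into one kernel-verified Lean document; each statement's English description precedes it below -/
import Mathlib

section
/- Let X be a rack and A an associative (not necessarily commutative) ring, regarded as a trivial X-module. For all p₁, p₂ ≥ 0 and all f₁ : X^{p₁} → A, f₂ : X^{p₂} → A, one has d_R^{p₁+p₂+1}(f₁ ≻ f₂) = (d_R^{p₁+1} f₁) ≻ f₂ + (−1)^{p₁} f₁ ≻ (d_R^{p₂+1} f₂) as functions X^{p₁+p₂+1} → A. -/
/-- The set of `(p,q)`-shuffles: permutations increasing on the first `p`
and on the last `q` (0-indexed) positions. -/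
def Sh (p q : ℕ) : Finset (Equiv.Perm (Fin (p + q))) :=
  Finset.univ.filter fun σ =>
    (∀ i j : Fin (p + q), (i : ℕ) < (j : ℕ) → (j : ℕ) < p → σ i < σ j) ∧
    (∀ i j : Fin (p + q), (i : ℕ) < (j : ℕ) → p ≤ (i : ℕ) → σ i < σ j)

/-- The `(p,q)`-shuffles with `σ(p) = p + q` (1-indexed). -/
def ShL (p q : ℕ) : Finset (Equiv.Perm (Fin (p + q))) :=
  (Sh p q).filter fun σ => ∀ i : Fin (p + q), (i : ℕ) + 1 = p → (σ i : ℕ) + 1 = p + q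

/-- The `(p,q)`-shuffles with `σ(p+q) = p + q` (1-indexed). -/
def ShT (p q : ℕ) : Finset (Equiv.Perm (Fin (p + q))) :=
  (Sh p q).filter fun σ => ∀ i : Fin (p + q), (i : ℕ) + 1 = p + q → (σ i : ℕ) + 1 = p + q

/-- `y k = x_{i₁} ▷ (x_{i₂} ▷ (⋯ ▷ (x_{i_j} ▷ x_{σ(k)})⋯))`, where `i₁ < ⋯ < i_j`
are the elements of `{σ(p+1),…,σ(p+q)}` (1-indexed) smaller than `σ(k)`. -/
def yVal {X : Type*} (op : X → X → X) (p q : ℕ) (σ : Equiv.Perm (Fin (p + q)))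
    (x : Fin (p + q) → X) (k : Fin p) : X :=
  ((Finset.univ.filter fun i : Fin (p + q) =>
      p ≤ ((σ.symm i : Fin (p + q)) : ℕ) ∧
        i < σ ⟨k, Nat.lt_of_lt_of_le k.isLt (Nat.le_add_right p q)⟩).sort (· ≤ ·)).foldr
    (fun i acc => op (x i) acc)
    (x (σ ⟨k, Nat.lt_of_lt_of_le k.isLt (Nat.le_add_right p q)⟩))

/-- The dendriform product `≻` on rack cochains. -/
def succP {X A : Type*} [Ring A] (op : X → X → X) (p q : ℕ)
    (f₁ : (Fin p → X) → A) (f₂ : (Fin q → X) → A) : (Fin (p + q) → X) → A :=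
  fun x => ∑ σ ∈ ShT p q, (Equiv.Perm.sign σ : ℤ) •
    (f₁ (fun k => yVal op p q σ x k) *
     f₂ (fun k => x (σ ⟨p + (k : ℕ), Nat.add_lt_add_left k.isLt p⟩)))

/-- The dendriform product `≺` on rack cochains. -/
def precP {X A : Type*} [Ring A] (op : X → X → X) (p q : ℕ)
    (f₁ : (Fin p → X) → A) (f₂ : (Fin q → X) → A) : (Fin (p + q) → X) → A :=
  fun x => ∑ σ ∈ ShL p q, (Equiv.Perm.sign σ : ℤ) •
    (f₁ (fun k => yVal op p q σ x k) *
     f₂ (fun k => x (σ ⟨p + (k : ℕ), Nat.add_lt_add_left k.isLt p⟩)))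

/-- The cubical face maps on tuples: for `ε = false` (i.e. ε = 0),
`(x₁,…,x_{n+1}) ↦ (x₁,…,x_{j-1}, x_j ▷ x_{j+1}, …, x_j ▷ x_{n+1})`
and for `ε = true` (i.e. ε = 1), `(x₁,…,x_{n+1}) ↦ (x₁,…,x_{j-1}, x_{j+1},…,x_{n+1})`
(`j` is 0-indexed here). -/
def rackFace {X : Type*} (op : X → X → X) (ε : Bool) {n : ℕ} (j : Fin (n + 1))
    (x : Fin (n + 1) → X) : Fin n → X :=
  fun k => if (k : ℕ) < (j : ℕ) then x k.castSucc
    else if ε then x k.succ else op (x j) (x k.succ)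

/-- The rack differential with trivial coefficients:
`d_R f (x) = Σ_{i=1}^{n+1} (−1)^i [ f(d_{i,0} x) − f(d_{i,1} x) ]`. -/
def rackDiff {X A : Type*} [AddCommGroup A] (op : X → X → X) {n : ℕ}
    (f : (Fin n → X) → A) : (Fin (n + 1) → X) → A :=
  fun x => ∑ j : Fin (n + 1),
    (-1 : ℤ) ^ ((j : ℕ) + 1) • (f (rackFace op false j x) - f (rackFace op true j x))

/-!
Both the rack differential and `≻` can be defined by recursion on the first letter of a word. The
differential splits off the two faces at that letter. In a shuffle the letter becomes the first
variable of one of the two factors and, if this is the second factor, acts on all variables of the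
first. With cochains of all degrees regarded as functions on words, the Leibniz rule is then an
induction on the word, by self-distributivity. The recursion for `≻` agrees with the sum over
shuffles because a shuffle takes its smallest value at the first position of one of its two blocks,
and removing that value leaves a shuffle; removal from the second block changes the sign by the
parity of the size of the first. If `p₂ = 0`, the identity permutation is the only shuffle and `≻`
is multiplication by a constant.
-/

/-- Cochains of all degrees at once, as functions on words: the value on words of length `n` is the
component of degree `n`. No degree appears in an index type, so the recursions below need no
casts. -/
abbrev WordCochain (X A : Type*) := List X → A

namespace WordCochain

variable {X A : Type*}

/-- The cochain of one degree less obtained by fixing the first variable. -/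
def fixHead (a : X) (F : WordCochain X A) : WordCochain X A := fun l => F (a :: l)

/-- The action of an element of the shelf on cochains, through all the variables. -/
def act (op : X → X → X) (a : X) (F : WordCochain X A) : WordCochain X A :=
  fun l => F (l.map (op a))

theorem act_act {op : X → X → X} (hself : ∀ x y z : X, op x (op y z) = op (op x y) (op x z))
    (a b : X) (F : WordCochain X A) : act op a (act op (op a b) F) = act op b (act op a F) := by
  funext l
  simp only [act, List.map_map, Function.comp_def, hself a b]

section AddCommGroup

variable [AddCommGroup A]

/-- The grading involution, equal to `(-1) ^ n` in degree `n`. -/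
def alternate (F : WordCochain X A) : WordCochain X A := fun l => (-1 : ℤ) ^ l.length • F l

/-- The rack differential, by recursion on the first letter: the two terms split off are the two
faces at the first variable, the other faces leave that variable alone. -/
def diff (op : X → X → X) : WordCochain X A → WordCochain X A
  | _, [] => 0
  | F, a :: l => F l - act op a F l - diff op (fixHead a F) l

theorem alternate_alternate (F : WordCochain X A) : alternate (alternate F) = F := by
  funext l
  simp only [alternate, smul_smul, ← mul_pow, neg_one_mul, neg_neg, one_pow, one_smul]

theorem fixHead_alternate (a : X) (F : WordCochain X A) :
    fixHead a (alternate F) = -alternate (fixHead a F) := by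
  funext l
  simp [fixHead, alternate, pow_succ]

theorem act_alternate (op : X → X → X) (a : X) (F : WordCochain X A) :
    act op a (alternate F) = alternate (act op a F) := by
  funext l
  simp only [act, alternate, List.length_map]

theorem fixHead_diff (op : X → X → X) (a : X) (F : WordCochain X A) :
    fixHead a (diff op F) = F - act op a F - diff op (fixHead a F) :=
  rfl

theorem diff_add (op : X → X → X) (F F' : WordCochain X A) :
    diff op (F + F') = diff op F + diff op F' := by
  funext l
  induction l generalizing F F' with
  | nil => exact (add_zero 0).symm
  | cons a l ih =>
    have hfix : fixHead a (F + F') = fixHead a F + fixHead a F' := rfl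
    simp only [diff, act, Pi.add_apply, hfix, ih]
    abel

theorem diff_zero (op : X → X → X) : diff op (0 : WordCochain X A) = 0 :=
  (AddMonoidHom.mk' (diff op) (diff_add op)).map_zero

theorem diff_neg (op : X → X → X) (F : WordCochain X A) : diff op (-F) = -diff op F :=
  (AddMonoidHom.mk' (diff op) (diff_add op)).map_neg F

theorem diff_congr_of_ne_nil (op : X → X → X) {F F' : WordCochain X A}
    (h : ∀ l ≠ [], F l = F' l) : diff op F = diff op F' := by
  funext l
  induction l generalizing F F' with
  | nil => rfl
  | cons a l ih =>
    have htail : diff op (fixHead a F) l = diff op (fixHead a F') l :=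
      ih fun m _ => h (a :: m) (List.cons_ne_nil a m)
    rcases eq_or_ne l [] with rfl | hl
    · simp [diff, act]
    · simp only [diff, act, htail, h l hl, h (l.map (op a)) (by simpa using hl)]

theorem alternate_diff (op : X → X → X) (F : WordCochain X A) :
    alternate (diff op F) = -diff op (alternate F) := by
  funext l
  induction l generalizing F with
  | nil => simp [alternate, diff]
  | cons a l ih =>
    have ih := ih (fixHead a F)
    simp only [Pi.neg_apply, diff, fixHead_alternate, diff_neg, ← ih, act_alternate]
    simp only [alternate, diff, List.length_cons, pow_succ, mul_neg_one, neg_smul, smul_sub]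
    abel

theorem act_diff {op : X → X → X} (hself : ∀ x y z : X, op x (op y z) = op (op x y) (op x z))
    (a : X) (F : WordCochain X A) : act op a (diff op F) = diff op (act op a F) := by
  funext l
  induction l generalizing F with
  | nil => rfl
  | cons b l ih =>
    calc diff op F (op a b :: l.map (op a))
        = act op a F l - act op a (act op (op a b) F) l
            - act op a (diff op (fixHead (op a b) F)) l := rfl
      _ = act op a F l - act op b (act op a F) l
            - diff op (act op a (fixHead (op a b) F)) l := by rw [act_act hself, ih]

end AddCommGroup

section Product

variable [NonUnitalNonAssocRing A]

/-- The dendriform product `≻`, by recursion on the first letter `a`. If `a` becomes the first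
variable of `F`, nothing else changes. If it becomes the first variable of `G`, it acts on all
variables of `F`, and the sign of moving `a` past them is that of the grading involution. The last
letter always goes to `G`. -/
def succ (op : X → X → X) : WordCochain X A → WordCochain X A → WordCochain X A
  | _, _, [] => 0
  | F, G, [a] => F [] * G [a]
  | F, G, a :: b :: l =>
    succ op (fixHead a F) G (b :: l) + succ op (alternate (act op a F)) (fixHead a G) (b :: l)

theorem fixHead_succ_of_ne_nil (op : X → X → X) (F G : WordCochain X A) (a : X) {l : List X}
    (hl : l ≠ []) :
    fixHead a (succ op F G) l =
      (succ op (fixHead a F) G + succ op (alternate (act op a F)) (fixHead a G)) l := by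
  obtain ⟨b, l, rfl⟩ := List.exists_cons_of_ne_nil hl
  rfl

theorem succ_add_left (op : X → X → X) (F F' G : WordCochain X A) :
    succ op (F + F') G = succ op F G + succ op F' G := by
  funext l
  induction l generalizing F F' G with
  | nil => exact (add_zero 0).symm
  | cons a l ih =>
    rcases l with _ | ⟨b, l⟩
    · exact add_mul _ _ _
    · have hfix : fixHead a (F + F') = fixHead a F + fixHead a F' := rfl
      have hact : alternate (act op a (F + F')) =
          alternate (act op a F) + alternate (act op a F') :=
        funext fun _ => smul_add _ _ _
      simp only [succ, Pi.add_apply, hfix, hact, ih]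
      abel

theorem succ_add_right (op : X → X → X) (F G G' : WordCochain X A) :
    succ op F (G + G') = succ op F G + succ op F G' := by
  funext l
  induction l generalizing F G G' with
  | nil => exact (add_zero 0).symm
  | cons a l ih =>
    rcases l with _ | ⟨b, l⟩
    · exact mul_add _ _ _
    · have hfix : fixHead a (G + G') = fixHead a G + fixHead a G' := rfl
      simp only [succ, Pi.add_apply, hfix, ih]
      abel

/-- The product `≻` as a biadditive map. -/
def succHom (op : X → X → X) : WordCochain X A →+ WordCochain X A →+ WordCochain X A :=
  AddMonoidHom.mk' (fun F => AddMonoidHom.mk' (succ op F) (succ_add_right op F))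
    fun F F' => AddMonoidHom.ext fun G => succ_add_left op F F' G

theorem succ_zero_left (op : X → X → X) (G : WordCochain X A) : succ op 0 G = 0 :=
  map_zero ((succHom (X := X) (A := A) op).flip G)

theorem succ_sub_left (op : X → X → X) (F F' G : WordCochain X A) :
    succ op (F - F') G = succ op F G - succ op F' G :=
  ((succHom op).flip G).map_sub F F'

theorem succ_sub_right (op : X → X → X) (F G G' : WordCochain X A) :
    succ op F (G - G') = succ op F G - succ op F G' :=
  (succHom op F).map_sub G G'

theorem succ_neg_left (op : X → X → X) (F G : WordCochain X A) :
    succ op (-F) G = -succ op F G :=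
  ((succHom op).flip G).map_neg F

theorem succ_zsmul_left (op : X → X → X) (z : ℤ) (F G : WordCochain X A) :
    succ op (z • F) G = z • succ op F G :=
  ((succHom op).flip G).map_zsmul z F

theorem act_succ {op : X → X → X} (hself : ∀ x y z : X, op x (op y z) = op (op x y) (op x z))
    (a : X) (F G : WordCochain X A) :
    act op a (succ op F G) = succ op (act op a F) (act op a G) := by
  funext l
  induction l generalizing F G with
  | nil => rfl
  | cons b l ih =>
    rcases l with _ | ⟨c, l⟩
    · rfl
    · calc act op a (succ op F G) (b :: c :: l)
          = act op a (succ op (fixHead (op a b) F) G) (c :: l) +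
              act op a (succ op (alternate (act op (op a b) F)) (fixHead (op a b) G)) (c :: l) :=
            rfl
        _ = succ op (act op a (fixHead (op a b) F)) (act op a G) (c :: l) +
              succ op (alternate (act op b (act op a F))) (act op a (fixHead (op a b) G))
                (c :: l) := by
            rw [ih, ih, act_alternate, act_act hself]

/-- Both sides are expanded along the first letter `a`. The two terms `act op a F ≻ G` on the
right-hand side, one from each summand, cancel; all other terms match by induction. -/
theorem diff_succ {op : X → X → X} (hself : ∀ x y z : X, op x (op y z) = op (op x y) (op x z))
    (F G : WordCochain X A) :
    diff op (succ op F G) = succ op (diff op F) G + succ op (alternate F) (diff op G) := by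
  funext l
  induction l generalizing F G with
  | nil => exact (add_zero 0).symm
  | cons a l ih =>
    rcases eq_or_ne l [] with rfl | hl
    · simp [diff, succ, act]
    · have hdiff : diff op (fixHead a (succ op F G)) = _ :=
        diff_congr_of_ne_nil op fun m hm => fixHead_succ_of_ne_nil op F G a hm
      have hleft := fixHead_succ_of_ne_nil op (diff op F) G a hl
      have hright := fixHead_succ_of_ne_nil op (alternate F) (diff op G) a hl
      change _ = fixHead a (succ op (diff op F) G) l + fixHead a (succ op (alternate F) _) l
      rw [diff, hdiff, diff_add, hleft, hright]
      simp only [Pi.add_apply, ih, act_succ hself, act_diff hself, act_alternate, fixHead_diff,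
        alternate_diff, alternate_alternate, fixHead_alternate, succ_sub_left, succ_sub_right,
        succ_neg_left, Pi.sub_apply, Pi.neg_apply]
      abel

end Product

section Degree

variable [AddCommGroup A] {F : WordCochain X A} {n : ℕ}

/-- The cochains concentrated in degree `n`. -/
def HasDegree (F : WordCochain X A) (n : ℕ) : Prop := ∀ l : List X, l.length ≠ n → F l = 0

theorem HasDegree.act (hF : F.HasDegree n) (op : X → X → X) (a : X) :
    (F.act op a).HasDegree n :=
  fun _ hl => hF _ (by rwa [List.length_map])

theorem HasDegree.fixHead (hF : F.HasDegree (n + 1)) (a : X) : (F.fixHead a).HasDegree n :=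
  fun _ hl => hF _ (by simpa using hl)

theorem HasDegree.fixHead_eq_zero (hF : F.HasDegree 0) (a : X) : F.fixHead a = 0 :=
  funext fun l => hF (a :: l) (by simp)

theorem HasDegree.zsmul (hF : F.HasDegree n) (z : ℤ) : (z • F).HasDegree n :=
  fun l hl => by rw [Pi.smul_apply, hF l hl, smul_zero]

theorem HasDegree.alternate_eq (hF : F.HasDegree n) : F.alternate = (-1 : ℤ) ^ n • F := by
  funext l
  rcases eq_or_ne l.length n with rfl | hl
  · rfl
  · simp [alternate, hF l hl]

theorem HasDegree.diff (hF : F.HasDegree n) (op : X → X → X) :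
    (F.diff op).HasDegree (n + 1) := by
  intro l hl
  induction l generalizing F n with
  | nil => rfl
  | cons a l ih =>
    have hln : l.length ≠ n := by simpa using hl
    have htail : WordCochain.diff op (F.fixHead a) l = 0 := by
      cases n with
      | zero => rw [hF.fixHead_eq_zero, diff_zero, Pi.zero_apply]
      | succ n => exact ih (hF.fixHead a) hln
    simp [WordCochain.diff, htail, hF l hln, hF.act op a l hln]

/-- The extension by zero of a cochain in `n` variables. -/
def extend (f : (Fin n → X) → A) : WordCochain X A :=
  fun l => if h : l.length = n then f (l.get ∘ Fin.cast h.symm) else 0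

theorem extend_ofFn (f : (Fin n → X) → A) (v : Fin n → X) : extend f (List.ofFn v) = f v := by
  rw [extend, dif_pos List.length_ofFn]
  congr 1
  funext i
  simp

theorem hasDegree_extend (f : (Fin n → X) → A) : (extend f).HasDegree n :=
  fun _ hl => dif_neg hl

end Degree

theorem succ_eq_zero_of_length_le [NonUnitalNonAssocRing A] (op : X → X → X)
    {F : WordCochain X A} {p : ℕ} (hF : F.HasDegree p) (G : WordCochain X A) {l : List X}
    (hl : l.length ≤ p) : succ op F G l = 0 := by
  induction l generalizing F G p with
  | nil => rfl
  | cons a l ih =>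
    obtain ⟨p, rfl⟩ : ∃ r, p = r + 1 := Nat.exists_eq_add_one.mpr (Nat.zero_lt_of_lt hl)
    have hlp : l.length ≤ p := Nat.le_of_succ_le_succ hl
    rcases l with _ | ⟨b, l⟩
    · rw [succ, hF [] (by simp), zero_mul]
    · have halt : (alternate (act op a F)).HasDegree (p + 1) := by
        rw [(hF.act op a).alternate_eq]
        exact (hF.act op a).zsmul _
      rw [succ, ih (hF.fixHead a) G hlp, ih halt _ (hlp.trans p.le_succ), add_zero]

end WordCochain

section ShufflePermutations

/-- The permutation of `Fin (n + 1)` with value `0` at `c` whose other values, read in order, form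
the permutation `e` of the nonzero elements. -/
def permInsertZero {n : ℕ} (c : Fin (n + 1)) (e : Equiv.Perm (Fin n)) :
    Equiv.Perm (Fin (n + 1)) :=
  Equiv.Perm.decomposeFin.symm (0, e) * c.cycleRange

@[simp]
theorem permInsertZero_self {n : ℕ} (c : Fin (n + 1)) (e : Equiv.Perm (Fin n)) :
    permInsertZero c e c = 0 := by
  simp [permInsertZero]

@[simp]
theorem permInsertZero_succAbove {n : ℕ} (c : Fin (n + 1)) (e : Equiv.Perm (Fin n)) (j : Fin n) :
    permInsertZero c e (c.succAbove j) = (e j).succ := by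
  simp [permInsertZero, Fin.cycleRange_succAbove]

@[simp]
theorem permInsertZero_symm_zero {n : ℕ} (c : Fin (n + 1)) (e : Equiv.Perm (Fin n)) :
    (permInsertZero c e).symm 0 = c := by
  rw [Equiv.symm_apply_eq, permInsertZero_self]

@[simp]
theorem permInsertZero_symm_succ {n : ℕ} (c : Fin (n + 1)) (e : Equiv.Perm (Fin n)) (j : Fin n) :
    (permInsertZero c e).symm j.succ = c.succAbove (e.symm j) := by
  rw [Equiv.symm_apply_eq, permInsertZero_succAbove, Equiv.apply_symm_apply]

theorem permInsertZero_zero_succ {n : ℕ} (e : Equiv.Perm (Fin n)) (j : Fin n) :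
    permInsertZero 0 e j.succ = (e j).succ := by
  rw [← Fin.succAbove_zero_apply, permInsertZero_succAbove]

theorem sign_permInsertZero {n : ℕ} (c : Fin (n + 1)) (e : Equiv.Perm (Fin n)) :
    Equiv.Perm.sign (permInsertZero c e) = (-1) ^ (c : ℕ) * Equiv.Perm.sign e := by
  simp [permInsertZero, Fin.sign_cycleRange, mul_comm]

theorem permInsertZero_bijective (n : ℕ) :
    Function.Bijective fun a : Fin (n + 1) × Equiv.Perm (Fin n) => permInsertZero a.1 a.2 := by
  rw [Fintype.bijective_iff_injective_and_card]
  refine ⟨?_, by simp [Fintype.card_perm, Nat.factorial_succ]⟩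
  rintro ⟨c, e⟩ ⟨c', e'⟩ (h : permInsertZero c e = permInsertZero c' e')
  obtain rfl : c = c' := by
    rw [← permInsertZero_symm_zero c e, h, permInsertZero_symm_zero]
  obtain rfl : e = e' := Equiv.ext fun j => Fin.succ_injective n <| by
    rw [← permInsertZero_succAbove c e, h, permInsertZero_succAbove]
  rfl

theorem strictMonoOn_permInsertZero_iff {n : ℕ} {c : Fin (n + 1)} {S : Set (Fin (n + 1))}
    (hc : c ∈ S → c ∈ lowerBounds S) (e : Equiv.Perm (Fin n)) :
    StrictMonoOn (permInsertZero c e) S ↔ StrictMonoOn e (c.succAbove ⁻¹' S) := by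
  constructor
  · intro h i hi j hj hij
    simpa using h hi hj (Fin.strictMono_succAbove c hij)
  · intro h i hi j hj hij
    cases j using Fin.succAboveCases c with
    | x => exact absurd (hc hj hi) hij.not_ge
    | p j =>
      cases i using Fin.succAboveCases c with
      | x => simp
      | p i => simpa using h hi hj (Fin.succAbove_lt_succAbove_iff.mp hij)

theorem le_succAbove_iff_le_castSucc {n : ℕ} (c : Fin (n + 1)) (i : Fin n) :
    c ≤ c.succAbove i ↔ c ≤ i.castSucc := by
  rw [← not_lt, Fin.succAbove_lt_iff_castSucc_lt, not_lt]

/-- The permutations of `Fin n` increasing on the first `p` positions and on the other positions,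
called `(p, n - p)`-shuffles. -/
def IsShuffle {n : ℕ} (p : ℕ) (σ : Equiv.Perm (Fin n)) : Prop :=
  StrictMonoOn σ {i | (i : ℕ) < p} ∧ StrictMonoOn σ {i | p ≤ (i : ℕ)}

theorem isShuffle_permInsertZero_zero_iff {n p : ℕ} (e : Equiv.Perm (Fin n)) :
    IsShuffle (p + 1) (permInsertZero 0 e) ↔ IsShuffle p e := by
  unfold IsShuffle
  rw [strictMonoOn_permInsertZero_iff (fun _ _ _ => Fin.zero_le _),
    strictMonoOn_permInsertZero_iff (fun _ _ _ => Fin.zero_le _)]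
  simp

theorem isShuffle_permInsertZero_self_iff {n : ℕ} (c : Fin (n + 1)) (e : Equiv.Perm (Fin n)) :
    IsShuffle (c : ℕ) (permInsertZero c e) ↔ IsShuffle (c : ℕ) e := by
  have hleft : c.succAbove ⁻¹' {i | (i : ℕ) < c} = {i : Fin n | (i : ℕ) < c} :=
    Set.ext fun i => Fin.succAbove_lt_iff_castSucc_lt c i
  have hright : c.succAbove ⁻¹' {i | (c : ℕ) ≤ i} = {i : Fin n | (c : ℕ) ≤ i} :=
    Set.ext fun i => le_succAbove_iff_le_castSucc c i
  have hnotMem : c ∉ {i : Fin (n + 1) | (i : ℕ) < c} := lt_irrefl (c : ℕ)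
  unfold IsShuffle
  rw [strictMonoOn_permInsertZero_iff (S := {i | (i : ℕ) < c}) (absurd · hnotMem),
    strictMonoOn_permInsertZero_iff (S := {i | (c : ℕ) ≤ i}) (fun _ _ hi => hi), hleft, hright]

theorem IsShuffle.symm_zero {n p : ℕ} {σ : Equiv.Perm (Fin (n + 1))} (hσ : IsShuffle p σ) :
    σ.symm 0 = 0 ∨ (σ.symm 0 : ℕ) = p := by
  by_contra! h
  obtain ⟨hzero, hcut⟩ := h
  have hpos : 0 < σ.symm 0 := Fin.pos_iff_ne_zero.mpr hzero
  have hnotlt (i : Fin (n + 1)) : ¬ σ i < σ (σ.symm 0) := by simp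
  rcases hcut.lt_or_gt with hlt | hgt
  · have hmem : (0 : Fin (n + 1)) ∈ {i : Fin (n + 1) | (i : ℕ) < p} := Nat.zero_lt_of_lt hlt
    exact hnotlt 0 (hσ.1 hmem hlt hpos)
  · let cut : Fin (n + 1) := ⟨p, hgt.trans (Fin.is_lt _)⟩
    have hmem : cut ∈ {i : Fin (n + 1) | p ≤ (i : ℕ)} := le_refl p
    exact hnotlt cut (hσ.2 hmem hgt.le hgt)

open Classical in
/-- The shuffles of `Fin (n + 1)` whose last position lies in the second block and is fixed, over
which the product `≻` with a cochain of positive degree is summed. -/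
noncomputable def lastShuffles (p n : ℕ) : Finset (Equiv.Perm (Fin (n + 1))) :=
  {σ | p ≤ n ∧ IsShuffle p σ ∧ σ (Fin.last n) = Fin.last n}

theorem mem_lastShuffles {p n : ℕ} {σ : Equiv.Perm (Fin (n + 1))} :
    σ ∈ lastShuffles p n ↔ p ≤ n ∧ IsShuffle p σ ∧ σ (Fin.last n) = Fin.last n := by
  simp [lastShuffles]

theorem lastShuffles_eq_empty {p n : ℕ} (hnp : n < p) : lastShuffles p n = ∅ :=
  Finset.eq_empty_of_forall_notMem fun _ hσ => hnp.not_ge (mem_lastShuffles.mp hσ).1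

theorem lastShuffles_zero_zero : lastShuffles 0 0 = {1} := by
  ext σ
  obtain rfl : σ = 1 := Subsingleton.elim (α := Equiv.Perm (Fin 1)) σ 1
  simp [mem_lastShuffles, IsShuffle, Set.subsingleton_of_subsingleton.strictMonoOn]

theorem permInsertZero_last_eq_last_iff {n : ℕ} {c : Fin (n + 2)} (hc : c ≠ Fin.last (n + 1))
    (e : Equiv.Perm (Fin (n + 1))) :
    permInsertZero c e (Fin.last (n + 1)) = Fin.last (n + 1) ↔ e (Fin.last n) = Fin.last n := by
  rw [← Fin.succAbove_ne_last_last hc, permInsertZero_succAbove, Fin.succAbove_ne_last_last hc,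
    ← Fin.succ_last, Fin.succ_inj]

theorem permInsertZero_zero_mem_lastShuffles_iff {p n : ℕ} (e : Equiv.Perm (Fin (n + 1))) :
    permInsertZero 0 e ∈ lastShuffles (p + 1) (n + 1) ↔ e ∈ lastShuffles p n := by
  rw [mem_lastShuffles, mem_lastShuffles, isShuffle_permInsertZero_zero_iff,
    permInsertZero_last_eq_last_iff (Fin.last_pos.ne), add_le_add_iff_right]

theorem permInsertZero_self_mem_lastShuffles_iff {n : ℕ} (c : Fin (n + 2))
    (e : Equiv.Perm (Fin (n + 1))) :
    permInsertZero c e ∈ lastShuffles c (n + 1) ↔ e ∈ lastShuffles c n := by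
  rw [mem_lastShuffles, mem_lastShuffles, isShuffle_permInsertZero_self_iff]
  rcases eq_or_ne c (Fin.last (n + 1)) with rfl | hc
  · simp
  · rw [permInsertZero_last_eq_last_iff hc]
    have hcn : (c : ℕ) < n + 1 := Fin.lt_last_iff_ne_last.mpr hc
    simp [hcn.le, Nat.lt_succ_iff.mp hcn]

theorem permInsertZero_notMem_lastShuffles {p n : ℕ} {c : Fin (n + 2)} (hzero : c ≠ 0)
    (hcut : (c : ℕ) ≠ p) (e : Equiv.Perm (Fin (n + 1))) :
    permInsertZero c e ∉ lastShuffles p (n + 1) := by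
  intro he
  simpa [hzero, hcut] using (mem_lastShuffles.mp he).2.1.symm_zero

section Sum

variable {M : Type*} [AddCommMonoid M]

theorem sum_lastShuffles_eq_sum_sum_ite (p n : ℕ) (φ : Equiv.Perm (Fin (n + 2)) → M) :
    ∑ σ ∈ lastShuffles p (n + 1), φ σ =
      ∑ c : Fin (n + 2), ∑ e : Equiv.Perm (Fin (n + 1)),
        if permInsertZero c e ∈ lastShuffles p (n + 1) then φ (permInsertZero c e) else 0 := by
  rw [← Fintype.sum_ite_mem, ← (permInsertZero_bijective (n + 1)).sum_comp,
    Fintype.sum_prod_type]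

theorem sum_lastShuffles_zero_succ (n : ℕ) (φ : Equiv.Perm (Fin (n + 2)) → M) :
    ∑ σ ∈ lastShuffles 0 (n + 1), φ σ = ∑ e ∈ lastShuffles 0 n, φ (permInsertZero 0 e) := by
  rw [sum_lastShuffles_eq_sum_sum_ite, Fintype.sum_eq_single 0]
  · have hmem (e) : permInsertZero 0 e ∈ lastShuffles 0 (n + 1) ↔ e ∈ lastShuffles 0 n :=
      permInsertZero_self_mem_lastShuffles_iff 0 e
    simp only [hmem, Fintype.sum_ite_mem]
  · intro c hc
    have hval : (c : ℕ) ≠ 0 := Fin.val_ne_zero_iff.mpr hc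
    exact Finset.sum_eq_zero fun e _ => if_neg (permInsertZero_notMem_lastShuffles hc hval e)

theorem sum_lastShuffles_succ_succ {p n : ℕ} (hp : p ≤ n) (φ : Equiv.Perm (Fin (n + 2)) → M) :
    ∑ σ ∈ lastShuffles (p + 1) (n + 1), φ σ =
      ∑ e ∈ lastShuffles p n, φ (permInsertZero 0 e) +
        ∑ e ∈ lastShuffles (p + 1) n,
          φ (permInsertZero ⟨p + 1, Nat.lt_succ_of_le (Nat.succ_le_succ hp)⟩ e) := by
  set cut : Fin (n + 2) := ⟨p + 1, Nat.lt_succ_of_le (Nat.succ_le_succ hp)⟩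
  have hcut (e) : permInsertZero cut e ∈ lastShuffles (p + 1) (n + 1) ↔
      e ∈ lastShuffles (p + 1) n :=
    permInsertZero_self_mem_lastShuffles_iff cut e
  rw [sum_lastShuffles_eq_sum_sum_ite, Fintype.sum_eq_add 0 cut]
  · simp only [permInsertZero_zero_mem_lastShuffles_iff, hcut, Fintype.sum_ite_mem]
  · exact (Fin.succ_ne_zero ⟨p, Nat.lt_succ_of_le hp⟩).symm
  · rintro c ⟨hzero, hne⟩
    have hval : (c : ℕ) ≠ p + 1 := fun h => hne (Fin.ext h)
    exact Finset.sum_eq_zero fun e _ => if_neg (permInsertZero_notMem_lastShuffles hzero hval e)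

end Sum

end ShufflePermutations

section ShuffleWords

variable {X : Type*}

/-- The letter at position `k` of a shuffle `σ` with first block of size `p`, acted upon by all
smaller letters of the second block: the `y k` of the definition of `≻`, for all positions. -/
def twist (op : X → X → X) (p : ℕ) {n : ℕ} (σ : Equiv.Perm (Fin n)) (x : Fin n → X)
    (k : Fin n) : X :=
  ((List.finRange n).filter fun i => p ≤ (σ.symm i : ℕ) ∧ i < σ k).foldr
    (fun i acc => op (x i) acc) (x (σ k))

/-- The word to which a shuffle applies the first factor of `≻`. -/
def leftWord (op : X → X → X) (p : ℕ) {n : ℕ} (σ : Equiv.Perm (Fin n)) (x : Fin n → X) :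
    List X :=
  (List.ofFn (twist op p σ x)).take p

/-- The word to which a shuffle applies the second factor of `≻`. -/
def rightWord (p : ℕ) {n : ℕ} (σ : Equiv.Perm (Fin n)) (x : Fin n → X) : List X :=
  (List.ofFn (x ∘ σ)).drop p

theorem twist_permInsertZero_zero_zero (op : X → X → X) (p : ℕ) {n : ℕ}
    (e : Equiv.Perm (Fin n)) (x : Fin (n + 1) → X) :
    twist op p (permInsertZero 0 e) x 0 = x 0 := by
  simp [twist]

theorem twist_permInsertZero_zero_succ (op : X → X → X) (p : ℕ) {n : ℕ}
    (e : Equiv.Perm (Fin n)) (x : Fin (n + 1) → X) (k : Fin n) :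
    twist op (p + 1) (permInsertZero 0 e) x k.succ = twist op p e (Fin.tail x) k := by
  unfold twist
  rw [permInsertZero_zero_succ, List.finRange_succ, List.filter_cons_of_neg (by simp),
    List.filter_map, List.foldr_map]
  simp [Function.comp_def, Fin.tail]

theorem twist_permInsertZero_self_castSucc (op : X → X → X) {n : ℕ} (c : Fin (n + 1))
    (e : Equiv.Perm (Fin n)) (x : Fin (n + 1) → X) {k : Fin n} (hk : k.castSucc < c) :
    twist op c (permInsertZero c e) x k.castSucc = op (x 0) (twist op c e (Fin.tail x) k) := by
  have hkc : permInsertZero c e k.castSucc = (e k).succ := by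
    rw [← Fin.succAbove_of_castSucc_lt c k hk, permInsertZero_succAbove]
  have hcut (i : Fin n) : (c : ℕ) ≤ (c.succAbove i : ℕ) ↔ (c : ℕ) ≤ (i : ℕ) :=
    le_succAbove_iff_le_castSucc c i
  unfold twist
  rw [hkc, List.finRange_succ, List.filter_cons_of_pos (by simp), List.filter_map,
    List.foldr_cons, List.foldr_map]
  simp only [Function.comp_def, Fin.tail, permInsertZero_symm_succ, hcut, Fin.succ_lt_succ_iff]

theorem leftWord_permInsertZero_zero (op : X → X → X) (p : ℕ) {n : ℕ} (e : Equiv.Perm (Fin n))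
    (x : Fin (n + 1) → X) :
    leftWord op (p + 1) (permInsertZero 0 e) x = x 0 :: leftWord op p e (Fin.tail x) := by
  simp only [leftWord, List.ofFn_succ, List.take_succ_cons, twist_permInsertZero_zero_zero,
    twist_permInsertZero_zero_succ]

theorem rightWord_permInsertZero_zero (p : ℕ) {n : ℕ} (e : Equiv.Perm (Fin n))
    (x : Fin (n + 1) → X) :
    rightWord (p + 1) (permInsertZero 0 e) x = rightWord p e (Fin.tail x) := by
  simp only [rightWord, List.ofFn_succ, List.drop_succ_cons, Function.comp_apply,
    permInsertZero_zero_succ]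
  rfl

theorem leftWord_permInsertZero_self (op : X → X → X) {n : ℕ} (c : Fin (n + 1))
    (e : Equiv.Perm (Fin n)) (x : Fin (n + 1) → X) :
    leftWord op c (permInsertZero c e) x = (leftWord op c e (Fin.tail x)).map (op (x 0)) := by
  apply List.ext_getElem
  · simp only [leftWord, List.length_take, List.length_ofFn, List.length_map]
    omega
  · intro k hk _
    have hkc : k < (c : ℕ) := hk.trans_le (List.length_take_le _ _)
    have hkn : k < n := hkc.trans_le c.is_le
    simpa only [leftWord, List.getElem_take, List.getElem_map, List.getElem_ofFn,
      Fin.castSucc_mk] using twist_permInsertZero_self_castSucc op c e x (k := ⟨k, hkn⟩) hkc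

theorem rightWord_permInsertZero_self {n : ℕ} (c : Fin (n + 1)) (e : Equiv.Perm (Fin n))
    (x : Fin (n + 1) → X) :
    rightWord c (permInsertZero c e) x = x 0 :: rightWord c e (Fin.tail x) := by
  have htail : (List.ofFn (x ∘ permInsertZero c e)).drop (c + 1) =
      (List.ofFn (Fin.tail x ∘ e)).drop c := by
    apply List.ext_getElem
    · simp
    · intro k hk hk'
      have hkn : (c : ℕ) + k < n := by
        rw [List.length_drop, List.length_ofFn] at hk'
        omega
      have hval : permInsertZero c e (Fin.succ ⟨c + k, hkn⟩) = (e ⟨c + k, hkn⟩).succ := by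
        rw [← Fin.succAbove_of_le_castSucc c ⟨c + k, hkn⟩ (Nat.le_add_right _ _),
          permInsertZero_succAbove]
      simpa [Fin.tail, add_right_comm] using congrArg x hval
  have hlength : (c : ℕ) < (List.ofFn (x ∘ permInsertZero c e)).length := by
    simpa using c.is_le
  rw [rightWord, List.drop_eq_getElem_cons hlength, htail, List.getElem_ofFn]
  simp only [Fin.eta, Function.comp_apply, permInsertZero_self, rightWord]

end ShuffleWords

section RackDiff

variable {X A : Type*}

section AddCommGroup

variable [AddCommGroup A]

theorem rackDiff_of_degree_zero (op : X → X → X) (f : (Fin 0 → X) → A) (x : Fin 1 → X) :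
    rackDiff op f x = 0 := by
  have hconst : f (rackFace op false 0 x) = f (rackFace op true 0 x) :=
    congrArg f (Subsingleton.elim _ _)
  simp [rackDiff, hconst]

theorem rackFace_zero (op : X → X → X) (ε : Bool) {n : ℕ} (x : Fin (n + 1) → X) :
    rackFace op ε 0 x = if ε then Fin.tail x else op (x 0) ∘ Fin.tail x := by
  funext k
  cases ε <;> rfl

theorem rackFace_succ (op : X → X → X) (ε : Bool) {n : ℕ} (j : Fin (n + 1)) (x : Fin (n + 2) → X) :
    rackFace op ε j.succ x = Fin.cons (x 0) (rackFace op ε j (Fin.tail x)) := by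
  funext k
  cases k using Fin.cases <;> simp [rackFace, Fin.tail]

theorem rackDiff_succ (op : X → X → X) {n : ℕ} (f : (Fin (n + 1) → X) → A) (x : Fin (n + 2) → X) :
    rackDiff op f x = f (Fin.tail x) - f (op (x 0) ∘ Fin.tail x) -
      rackDiff op (fun v => f (Fin.cons (x 0) v)) (Fin.tail x) := by
  simp only [rackDiff]
  rw [Fin.sum_univ_succ]
  simp only [rackFace_zero, rackFace_succ, Fin.val_succ, Fin.val_zero, pow_succ _ (_ + 1),
    mul_neg_one, neg_smul, Finset.sum_neg_distrib]
  simp [← sub_eq_add_neg]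

end AddCommGroup

theorem rackDiff_mul_const [NonUnitalNonAssocRing A] (op : X → X → X) {n : ℕ}
    (f : (Fin n → X) → A) (a : A) (x : Fin (n + 1) → X) :
    rackDiff op (fun y => f y * a) x = rackDiff op f x * a := by
  simp only [rackDiff, Finset.sum_mul, smul_mul_assoc, sub_mul]

end RackDiff

section TupleShuffles

variable {X : Type*}

theorem mem_sh_iff {p q : ℕ} {σ : Equiv.Perm (Fin (p + q))} : σ ∈ Sh p q ↔ IsShuffle p σ := by
  simp only [Sh, Finset.mem_filter_univ, IsShuffle, StrictMonoOn, Set.mem_ofPred_eq]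
  refine and_congr ⟨fun h i _ j hj hij => h i j hij hj, fun h i j hij hj => ?_⟩
    ⟨fun h i hi j _ hij => h i j hij hi, fun h i j hij hi => ?_⟩
  · exact h (hij.trans hj) hj hij
  · exact h hi (hi.trans hij.le) hij

theorem shT_succ (p q : ℕ) : ShT p (q + 1) = lastShuffles p (p + q) := by
  ext σ
  have hlast : (∀ i : Fin (p + (q + 1)), (i : ℕ) + 1 = p + (q + 1) →
      (σ i : ℕ) + 1 = p + (q + 1)) ↔ σ (Fin.last (p + q)) = Fin.last (p + q) := by
    constructor
    · exact fun h => Fin.ext (Nat.succ_injective (h (Fin.last (p + q)) rfl))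
    · intro h i hi
      obtain rfl : i = Fin.last (p + q) := Fin.ext (Nat.succ_injective hi)
      exact congrArg (fun j : Fin (p + (q + 1)) => (j : ℕ) + 1) h
  rw [ShT, Finset.mem_filter, mem_sh_iff, hlast, mem_lastShuffles]
  exact (and_iff_right (Nat.le_add_right p q)).symm

theorem yVal_eq_twist (op : X → X → X) {p q : ℕ} (σ : Equiv.Perm (Fin (p + q)))
    (x : Fin (p + q) → X) (k : Fin p) :
    yVal op p q σ x k = twist op p σ x (Fin.castAdd q k) := by
  have hsort : (Finset.univ.filter fun i : Fin (p + q) =>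
      p ≤ (σ.symm i : ℕ) ∧ i < σ (Fin.castAdd q k)).sort (· ≤ ·) =
        (List.finRange (p + q)).filter fun i => p ≤ (σ.symm i : ℕ) ∧ i < σ (Fin.castAdd q k) :=
    (Finset.sortedLT_sort _).eq_of_mem_iff
      ((List.sortedLT_finRange _).pairwise.filter _).sortedLT (by simp)
  exact congrArg (List.foldr _ _) hsort

theorem leftWord_eq_ofFn_yVal (op : X → X → X) {p q : ℕ} (σ : Equiv.Perm (Fin (p + q)))
    (x : Fin (p + q) → X) : leftWord op p σ x = List.ofFn (yVal op p q σ x) := by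
  apply List.ext_getElem
  · simp [leftWord]
  · intro k _ hk
    simp only [leftWord, List.getElem_take, List.getElem_ofFn, yVal_eq_twist]
    rfl

theorem rightWord_eq_ofFn {p q : ℕ} (σ : Equiv.Perm (Fin (p + q))) (x : Fin (p + q) → X) :
    rightWord p σ x = List.ofFn fun k : Fin q => x (σ (Fin.natAdd p k)) := by
  apply List.ext_getElem
  · simp [rightWord]
  · intro k _ hk
    simp only [rightWord, List.getElem_drop, List.getElem_ofFn]
    rfl

theorem shT_zero_right (p : ℕ) : ShT p 0 = {1} := by
  ext σ
  rw [ShT, Finset.mem_filter, mem_sh_iff, Finset.mem_singleton]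
  constructor
  · rintro ⟨hσ, -⟩
    have hmono : StrictMono σ := fun i j hij => hσ.1 i.is_lt j.is_lt hij
    exact DFunLike.coe_injective <| (hmono.range_inj strictMono_id).mp (by simp)
  · rintro rfl
    exact ⟨⟨strictMono_id.strictMonoOn _, strictMono_id.strictMonoOn _⟩, fun _ => id⟩

theorem yVal_one_zero_right (op : X → X → X) {p : ℕ} (x : Fin (p + 0) → X) :
    yVal op p 0 1 x = x := by
  funext k
  have hempty : ((List.finRange (p + 0)).filter fun i : Fin (p + 0) => p ≤ i ∧ i < k) = [] :=
    List.filter_eq_nil_iff.mpr fun i _ => by simp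
  rw [yVal_eq_twist]
  exact congrArg (List.foldr _ (x k)) hempty

theorem succP_zero_right {A : Type*} [Ring A] (op : X → X → X) (p q : ℕ) (f : (Fin p → X) → A) :
    succP op p q f 0 = 0 := by
  funext x
  simp [succP]

theorem succP_of_degree_zero_right {A : Type*} [Ring A] (op : X → X → X) {p : ℕ}
    (f : (Fin p → X) → A) (g : (Fin 0 → X) → A) :
    succP op p 0 f g = fun x => f x * g Fin.elim0 := by
  funext x
  simp only [succP, shT_zero_right, Finset.sum_singleton, yVal_one_zero_right,
    Equiv.Perm.sign_one, Units.val_one, one_smul]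
  congr 2
  exact Subsingleton.elim _ _

end TupleShuffles

namespace WordCochain

variable {X A : Type*}

section ShuffleSum

variable [NonUnitalNonAssocRing A]

/-- The term of `F ≻ G` at the shuffle `σ` whose first block has size `p`. -/
def shuffleTerm (op : X → X → X) (p : ℕ) (F G : WordCochain X A) {n : ℕ} (x : Fin n → X)
    (σ : Equiv.Perm (Fin n)) : A :=
  (Equiv.Perm.sign σ : ℤ) • (F (leftWord op p σ x) * G (rightWord p σ x))

theorem shuffleTerm_permInsertZero_zero (op : X → X → X) (p : ℕ) (F G : WordCochain X A) {n : ℕ}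
    (x : Fin (n + 1) → X) (e : Equiv.Perm (Fin n)) :
    shuffleTerm op (p + 1) F G x (permInsertZero 0 e) =
      shuffleTerm op p (fixHead (x 0) F) G (Fin.tail x) e := by
  simp [shuffleTerm, sign_permInsertZero, leftWord_permInsertZero_zero,
    rightWord_permInsertZero_zero, fixHead]

theorem shuffleTerm_permInsertZero_self (op : X → X → X) (F G : WordCochain X A) {n : ℕ}
    (x : Fin (n + 1) → X) (c : Fin (n + 1)) (e : Equiv.Perm (Fin n)) :
    shuffleTerm op c F G x (permInsertZero c e) =
      (-1 : ℤ) ^ (c : ℕ) •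
        shuffleTerm op c (act op (x 0) F) (fixHead (x 0) G) (Fin.tail x) e := by
  simp [shuffleTerm, sign_permInsertZero, leftWord_permInsertZero_self,
    rightWord_permInsertZero_self, smul_smul, act, fixHead]

theorem succ_ofFn_eq_add (op : X → X → X) {F : WordCochain X A} {p : ℕ} (hF : F.HasDegree p)
    (G : WordCochain X A) {n : ℕ} (x : Fin (n + 2) → X) :
    succ op F G (List.ofFn x) =
      succ op (fixHead (x 0) F) G (List.ofFn (Fin.tail x)) +
        (-1 : ℤ) ^ p •
          succ op (act op (x 0) F) (fixHead (x 0) G) (List.ofFn (Fin.tail x)) := by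
  have hne : List.ofFn (Fin.tail x) ≠ [] := by simp
  have hrec := fixHead_succ_of_ne_nil op F G (x 0) hne
  rwa [(hF.act op (x 0)).alternate_eq, succ_zsmul_left, fixHead, ← List.ofFn_cons,
    Fin.cons_self_tail] at hrec

/-- Both sides are expanded along the value `0` of `σ`, which is taken at the first position of the
first or of the second block. -/
theorem succ_ofFn (op : X → X → X) {F : WordCochain X A} {p : ℕ} (hF : F.HasDegree p)
    (G : WordCochain X A) {n : ℕ} (x : Fin (n + 1) → X) :
    succ op F G (List.ofFn x) = ∑ σ ∈ lastShuffles p n, shuffleTerm op p F G x σ := by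
  induction n generalizing F G p with
  | zero =>
    cases p with
    | zero => simp [lastShuffles_zero_zero, shuffleTerm, leftWord, rightWord, succ]
    | succ p => simp [lastShuffles_eq_empty, succ, hF [] (Nat.succ_ne_zero p).symm]
  | succ n ih =>
    rcases lt_or_ge (n + 1) p with hnp | hpn
    · rw [succ_eq_zero_of_length_le op hF G (by simpa using hnp), lastShuffles_eq_empty hnp,
        Finset.sum_empty]
    rw [succ_ofFn_eq_add op hF, ih (hF.act op (x 0))]
    cases p with
    | zero =>
      have hcut := shuffleTerm_permInsertZero_self op F G x 0
      rw [hF.fixHead_eq_zero, succ_zero_left, Pi.zero_apply, zero_add, sum_lastShuffles_zero_succ,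
        Finset.smul_sum]
      exact Finset.sum_congr rfl fun e _ => (hcut e).symm
    | succ p =>
      have hp : p ≤ n := Nat.le_of_succ_le_succ hpn
      have hcut := shuffleTerm_permInsertZero_self op F G x ⟨p + 1, by omega⟩
      rw [ih (hF.fixHead (x 0)), sum_lastShuffles_succ_succ hp, Finset.smul_sum]
      simp only [shuffleTerm_permInsertZero_zero, hcut]

end ShuffleSum

section Comparison

theorem diff_ofFn [AddCommGroup A] (op : X → X → X) {n : ℕ} {F : WordCochain X A}
    {f : (Fin n → X) → A} (hF : ∀ v, F (List.ofFn v) = f v) (x : Fin (n + 1) → X) :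
    diff op F (List.ofFn x) = rackDiff op f x := by
  induction n generalizing F with
  | zero => simp [rackDiff_of_degree_zero, diff, act]
  | succ n ih =>
    have hfix (v : Fin n → X) : fixHead (x 0) F (List.ofFn v) = f (Fin.cons (x 0) v) := by
      rw [← hF, List.ofFn_cons]
      rfl
    rw [rackDiff_succ, ← ih hfix, ← hF, ← hF, ← List.map_ofFn, List.ofFn_succ]
    rfl

theorem succ_ofFn_eq_succP [Ring A] (op : X → X → X) {p q : ℕ} {F G : WordCochain X A}
    {f : (Fin p → X) → A} {g : (Fin (q + 1) → X) → A} (hF : F.HasDegree p)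
    (hf : ∀ v, F (List.ofFn v) = f v) (hg : ∀ v, G (List.ofFn v) = g v)
    (x : Fin (p + (q + 1)) → X) :
    succ op F G (List.ofFn x) = succP op p (q + 1) f g x := by
  refine (succ_ofFn op hF G (n := p + q) x).trans ?_
  rw [← shT_succ]
  refine Finset.sum_congr rfl fun σ _ => ?_
  change _ • (_ * _) = _
  rw [leftWord_eq_ofFn_yVal (q := q + 1), hf, rightWord_eq_ofFn (q := q + 1), hg]
  rfl

end Comparison

end WordCochain

open WordCochain in
theorem statement3_general {X A : Type*} [Ring A] (op : X → X → X)
    (hself : ∀ x y z : X, op x (op y z) = op (op x y) (op x z))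
    (p₁ p₂ : ℕ) (f₁ : (Fin p₁ → X) → A) (f₂ : (Fin p₂ → X) → A)
    (x : Fin (p₁ + p₂ + 1) → X) :
    rackDiff op (succP op p₁ p₂ f₁ f₂) x =
      succP op (p₁ + 1) p₂ (rackDiff op f₁) f₂ (x ∘ Fin.cast (Nat.succ_add p₁ p₂)) +
        (-1 : ℤ) ^ p₁ • succP op p₁ (p₂ + 1) f₁ (rackDiff op f₂) x := by
  cases p₂ with
  | zero =>
    have hf₂ : rackDiff op f₂ = 0 := funext (rackDiff_of_degree_zero op f₂)
    rw [hf₂, succP_zero_right, Pi.zero_apply, smul_zero, succP_of_degree_zero_right,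
      succP_of_degree_zero_right]
    exact (rackDiff_mul_const op f₁ _ x).trans (add_zero _).symm
  | succ q =>
    have hdeg : (extend f₁).HasDegree p₁ := hasDegree_extend f₁
    have hf₁ := extend_ofFn f₁
    have hf₂ := extend_ofFn f₂
    have hcast : List.ofFn (x ∘ Fin.cast (Nat.succ_add p₁ (q + 1))) = List.ofFn x :=
      (List.ofFn_congr (Nat.succ_add p₁ (q + 1)).symm x).symm
    rw [← diff_ofFn op (succ_ofFn_eq_succP op hdeg hf₁ hf₂),
      ← succ_ofFn_eq_succP op (hdeg.diff op) (diff_ofFn op hf₁) hf₂,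
      ← succ_ofFn_eq_succP op hdeg hf₁ (diff_ofFn op hf₂), diff_succ hself, hdeg.alternate_eq,
      succ_zsmul_left, hcast]
    rfl

/-- For a rack `(X, ▷)` and an associative ring `A` (trivial coefficients),
the rack differential is a derivation for `≻`:
`d_R(f₁ ≻ f₂) = (d_R f₁) ≻ f₂ + (−1)^{p₁} f₁ ≻ (d_R f₂)`. -/
theorem statement3 {X A : Type*} [Ring A] (op : X → X → X)
    (hself : ∀ x y z : X, op x (op y z) = op (op x y) (op x z))
    (hbij : ∀ x : X, Function.Bijective (op x))
    (p₁ p₂ : ℕ) (f₁ : (Fin p₁ → X) → A) (f₂ : (Fin p₂ → X) → A)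
    (x : Fin (p₁ + p₂ + 1) → X) :
    rackDiff op (succP op p₁ p₂ f₁ f₂) x =
      succP op (p₁ + 1) p₂ (rackDiff op f₁) f₂
        (x ∘ Fin.cast (show p₁ + 1 + p₂ = p₁ + p₂ + 1 by omega)) +
      ((-1 : ℤ) ^ p₁) •
        succP op p₁ (p₂ + 1) f₁ (rackDiff op f₂)
          (x ∘ Fin.cast (show p₁ + (p₂ + 1) = p₁ + p₂ + 1 by omega)) := by
  exact statement3_general op hself p₁ p₂ f₁ f₂ x
end

section
/- Let X be a rack and A an abelian group, regarded as a trivial X-module. The rack differential squares to zero: for all n ≥ 0 and all f : X^n → A, d_R^{n+2}(d_R^{n+1} f) = 0. -/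
/-!
The faces satisfy the cubical identities `d_{i,ε} d_{j+1,δ} = d_{j,δ} d_{i,ε}` for `i ≤ j`; when
both faces act by `▷`, this is self-distributivity. Hence the maps `f ↦ f ∘ d_{j,0} - f ∘ d_{j,1}`,
whose alternating sum is the differential, satisfy the cosimplicial identities, and in the double
sum for the square of the differential the terms indexed by `(j + 1, i)` and `(i, j)` with `i ≤ j`
cancel.
-/

theorem sum_sum_neg_one_pow_smul_eq_zero_of_succ_eq_castSucc {A : Type*} [AddCommGroup A] {n : ℕ}
    {g : Fin (n + 2) → Fin (n + 1) → A}
    (hg : ∀ i j : Fin (n + 1), i ≤ j → g j.succ i = g i.castSucc j) :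
    ∑ j : Fin (n + 2), ∑ i : Fin (n + 1), (-1 : ℤ) ^ ((j : ℕ) + i) • g j i = 0 := by
  rw [Fin.sum_sum_eq_sum_triangle_add]
  refine Finset.sum_eq_zero fun i _ ↦ Finset.sum_eq_zero fun j hij ↦ ?_
  rw [hg i j (Finset.mem_Ici.mp hij), ← add_smul, Fin.val_castSucc, Fin.val_succ]
  have hsign : (-1 : ℤ) ^ ((i : ℕ) + j) + (-1) ^ ((j : ℕ) + 1 + i) = 0 := by ring
  rw [hsign, zero_smul]

section ShelfCohomology

variable {X A : Type*} [AddCommGroup A] {n : ℕ} {op : X → X → X}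

theorem rackFace_rackFace (hself : ∀ x y z : X, op x (op y z) = op (op x y) (op x z))
    (ε δ : Bool) {i j : Fin (n + 1)} (hij : i ≤ j) (x : Fin (n + 2) → X) :
    rackFace op ε i (rackFace op δ j.succ x) = rackFace op δ j (rackFace op ε i.castSucc x) := by
  funext k
  have hi : (i : ℕ) < j + 1 := Nat.lt_succ_of_le hij
  have hj : ¬ (j : ℕ) < i := Nat.not_lt.mpr hij
  rcases lt_or_ge (k : ℕ) i with hki | hik
  · have hkj : (k : ℕ) < j := hki.trans_le hij
    simp [rackFace, hki, hkj, hkj.trans (Nat.lt_succ_self _)]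
  rcases lt_or_ge (k : ℕ) j with hkj | hjk
  · simp [rackFace, hi, hik.not_gt, hkj]
  · have hik' : ¬ (k : ℕ) + 1 < i := by omega
    cases ε <;> cases δ <;> simp [rackFace, hi, hj, hik.not_gt, hik', hjk.not_gt,
      hself (x i.castSucc)]

variable (op) in
/-- The map on cochains induced by the difference of the two opposite faces in direction `j`, i.e.
the `j`-th summand of `rackDiff op` without its sign. -/
@[simps]
def rackCoface (j : Fin (n + 1)) : ((Fin n → X) → A) →+ ((Fin (n + 1) → X) → A) where
  toFun f x := f (rackFace op false j x) - f (rackFace op true j x)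
  map_zero' := by ext; simp
  map_add' f g := by ext; simp only [Pi.add_apply]; abel

theorem rackDiff_eq_sum_rackCoface (f : (Fin n → X) → A) :
    rackDiff op f = ∑ j : Fin (n + 1), (-1 : ℤ) ^ ((j : ℕ) + 1) • rackCoface op j f := by
  ext x
  simp [rackDiff]

theorem rackCoface_succ_rackCoface (hself : ∀ x y z : X, op x (op y z) = op (op x y) (op x z))
    {i j : Fin (n + 1)} (hij : i ≤ j) (f : (Fin n → X) → A) :
    rackCoface op j.succ (rackCoface op i f) = rackCoface op i.castSucc (rackCoface op j f) := by
  ext x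
  simp only [rackCoface_apply, rackFace_rackFace hself _ _ hij]
  abel

end ShelfCohomology

theorem statement6_general {X A : Type*} [AddCommGroup A] {op : X → X → X}
    (hself : ∀ x y z : X, op x (op y z) = op (op x y) (op x z)) {n : ℕ}
    (f : (Fin n → X) → A) : rackDiff op (rackDiff op f) = 0 := by
  calc
    rackDiff op (rackDiff op f)
      = ∑ j : Fin (n + 2), ∑ i : Fin (n + 1),
          (-1 : ℤ) ^ ((j : ℕ) + i) • rackCoface op j (rackCoface op i f) := by
        simp only [rackDiff_eq_sum_rackCoface, map_sum, map_zsmul, Finset.smul_sum, smul_smul]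
        refine Fintype.sum_congr _ _ fun j ↦ Fintype.sum_congr _ _ fun i ↦ ?_
        congr 1
        ring
    _ = 0 := sum_sum_neg_one_pow_smul_eq_zero_of_succ_eq_castSucc
        fun _ _ hij ↦ rackCoface_succ_rackCoface hself hij f

/-- For a rack `(X, ▷)` and an abelian group `A` (trivial coefficients),
the rack differential squares to zero. -/
theorem statement6 {X A : Type*} [AddCommGroup A] (op : X → X → X)
    (hself : ∀ x y z : X, op x (op y z) = op (op x y) (op x z))
    (hbij : ∀ x : X, Function.Bijective (op x))
    (n : ℕ) (f : (Fin n → X) → A) :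
    rackDiff op (rackDiff op f) = 0 :=
  statement6_general hself f
end

section
/- Let G be a group and A an abelian group, regarded as a trivial G-module. The maps S^n : Maps(G^n, A) → Maps(G^n, A), S^n(f)(x₁,…,x_n) = Σ_{σ ∈ S_n} ε(σ) f(y₁,…,y_n), where y_k = x_{i₁} ▷ (⋯ ▷ (x_{i_j} ▷ x_{σ(k)})⋯) with x ▷ y = xyx⁻¹ and i₁ < ⋯ < i_j the elements of {σ(k+1),…,σ(n)} smaller than σ(k), form a morphism of cochain complexes from the group cochain complex to the rack cochain complex of Conj(G): for all n ≥ 0 and f : G^n → A, d_R^{n+1}(S^n f) = S^{n+1}(d_G^{n+1} f). -/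
/-- `y k = x_{i₁} ▷ (⋯ ▷ (x_{i_j} ▷ x_{σ(k)})⋯)` with `x ▷ y = x·y·x⁻¹`, where
`i₁ < ⋯ < i_j` are the elements of `{σ(k+1),…,σ(n)}` (1-indexed) smaller than `σ(k)`. -/
def yGroup {G : Type*} [Group G] {n : ℕ} (σ : Equiv.Perm (Fin n)) (x : Fin n → G)
    (k : Fin n) : G :=
  ((Finset.univ.filter fun i : Fin n =>
      (k : ℕ) < ((σ.symm i : Fin n) : ℕ) ∧ i < σ k).sort (· ≤ ·)).foldr
    (fun i acc => x i * acc * (x i)⁻¹) (x (σ k))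

/-- The map `S^n : Maps(G^n, A) → Maps(G^n, A)`,
`S^n(f)(x₁,…,x_n) = Σ_{σ ∈ S_n} ε(σ)·f(y₁,…,y_n)`. -/
def SMap {G A : Type*} [Group G] [AddCommGroup A] {n : ℕ} (f : (Fin n → G) → A) :
    (Fin n → G) → A :=
  fun x => ∑ σ : Equiv.Perm (Fin n), (Equiv.Perm.sign σ : ℤ) • f (fun k => yGroup σ x k)

/-- The group-cohomology differential with trivial coefficients:
`d_G f(x₁,…,x_{n+1}) = f(x₂,…,x_{n+1}) + Σ_{i=1}^n (−1)^i f(x₁,…,x_i x_{i+1},…,x_{n+1})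
  + (−1)^{n+1} f(x₁,…,x_n)`. -/
def groupDiff {G A : Type*} [Group G] [AddCommGroup A] {n : ℕ} (f : (Fin n → G) → A) :
    (Fin (n + 1) → G) → A :=
  fun x => f (fun k => x k.succ)
    + ∑ i : Fin n, (-1 : ℤ) ^ ((i : ℕ) + 1) •
        f (fun k => if (k : ℕ) < (i : ℕ) then x k.castSucc
            else if (k : ℕ) = (i : ℕ) then x k.castSucc * x k.succ else x k.succ)
    + (-1 : ℤ) ^ (n + 1) • f (fun k => x k.castSucc)

/-!
Expand `S^{n+1} (d_G f)` according to the faces in `d_G`. The terms multiplying the entries at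
positions `i` and `i + 1` cancel in pairs under `σ ↦ σ ∘ (i i+1)`: the two products agree, by the
relation `c * z = (c * z * c⁻¹) * c`, and the signs are opposite. The terms dropping the first entry
are grouped by the value `j = σ(1)`, and those dropping the last entry by `j = σ(n+1)`. In the first
case `x_j` never acts on the remaining entries, which gives the face deleting `x_j`. In the second
case `x_j` acts on every `x_m` with `m > j`, which gives the face acting by `x_j`.
-/

section SortedProd

variable {ι κ M N G : Type*} [LinearOrder ι] [LinearOrder κ] [Monoid M] [Monoid N] [Group G]

/-- The product `x i₁ * ⋯ * x i_j` over the elements `i₁ < ⋯ < i_j` of a finite set `s`. -/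
def sortedProd (s : Finset ι) (x : ι → M) : M := (s.sort.map x).prod

lemma sortedProd_singleton (i : ι) (x : ι → M) : sortedProd {i} x = x i := by
  simp [sortedProd]

lemma sortedProd_congr {s : Finset ι} {x y : ι → M} (h : ∀ i ∈ s, x i = y i) :
    sortedProd s x = sortedProd s y :=
  congrArg List.prod (List.map_congr_left fun i hi => h i ((Finset.mem_sort _).1 hi))

lemma map_sortedProd (φ : M →* N) (s : Finset ι) (x : ι → M) :
    φ (sortedProd s x) = sortedProd s (φ ∘ x) := by
  simp [sortedProd, map_list_prod]

lemma sortedProd_map {e : ι ↪ κ} (he : StrictMono e) (s : Finset ι) (x : κ → M) :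
    sortedProd (s.map e) x = sortedProd s (x ∘ e) := by
  rw [sortedProd, ← (he.strictMonoOn _).map_finsetSort, List.map_map]
  rfl

lemma sortedProd_union {s t : Finset ι} (h : ∀ i ∈ s, ∀ j ∈ t, i < j) (x : ι → M) :
    sortedProd (s ∪ t) x = sortedProd s x * sortedProd t x := by
  have hnodup : (s.sort ++ t.sort).Nodup :=
    List.nodup_append.2 ⟨s.sort_nodup _, t.sort_nodup _, fun i hi j hj =>
      (h i ((Finset.mem_sort _).1 hi) j ((Finset.mem_sort _).1 hj)).ne⟩
  have hsorted : (s.sort ++ t.sort).Pairwise (· ≤ ·) :=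
    List.pairwise_append.2 ⟨s.pairwise_sort _, t.pairwise_sort _, fun i hi j hj =>
      (h i ((Finset.mem_sort _).1 hi) j ((Finset.mem_sort _).1 hj)).le⟩
  have hsort : (s ∪ t).sort = s.sort ++ t.sort := by
    rw [← (List.toFinset_sort (· ≤ ·) hnodup).2 hsorted, List.toFinset_append,
      Finset.sort_toFinset, Finset.sort_toFinset]
  simp only [sortedProd, hsort, List.map_append, List.prod_append]

lemma sortedProd_eq_filter_lt_mul_filter_gt {s : Finset ι} {j : ι} (hj : j ∉ s) (x : ι → M) :
    sortedProd s x = sortedProd {i ∈ s | i < j} x * sortedProd {i ∈ s | j < i} x := by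
  rw [← sortedProd_union fun i hi k hk =>
    (Finset.mem_filter.1 hi).2.trans (Finset.mem_filter.1 hk).2]
  congr 1
  ext i
  have : i ∈ s → i ≠ j := fun hi => ne_of_mem_of_not_mem hi hj
  grind

lemma sortedProd_insert {s : Finset ι} {j : ι} (hj : j ∉ s) (x : ι → M) :
    sortedProd (insert j s) x =
      sortedProd {i ∈ s | i < j} x * (x j * sortedProd {i ∈ s | j < i} x) := by
  rw [← sortedProd_singleton j x, ← sortedProd_union (by simp), ← sortedProd_union (by grind)]
  congr 1
  ext i
  have : i ∈ s → i ≠ j := fun hi => ne_of_mem_of_not_mem hi hj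
  grind

lemma sortedProd_insert_eq_conj_mul {s : Finset ι} {j : ι} (hj : j ∉ s) (x : ι → G) :
    sortedProd (insert j s) x =
      MulAut.conj (sortedProd {i ∈ s | i < j} x) (x j) * sortedProd s x := by
  rw [sortedProd_insert hj, sortedProd_eq_filter_lt_mul_filter_gt hj x, MulAut.conj_apply]
  group

/-- The family `x` with the entries at indices `≥ j` conjugated by `x j`. It extends the face
`rackFace (fun x y => x * y * x⁻¹) false j x`, which omits the index `j`. -/
def conjFrom (j : ι) (x : ι → G) (i : ι) : G :=
  if i < j then x i else MulAut.conj (x j) (x i)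

lemma conjFrom_of_lt {i j : ι} (h : i < j) (x : ι → G) : conjFrom j x i = x i :=
  if_pos h

lemma conjFrom_of_le {i j : ι} (h : j ≤ i) (x : ι → G) :
    conjFrom j x i = MulAut.conj (x j) (x i) :=
  if_neg h.not_gt

lemma sortedProd_conjFrom_mul {s : Finset ι} {j : ι} (hj : j ∉ s) (x : ι → G) :
    sortedProd s (conjFrom j x) * x j = sortedProd (insert j s) x := by
  have hlt : sortedProd {i ∈ s | i < j} (conjFrom j x) = sortedProd {i ∈ s | i < j} x :=
    sortedProd_congr fun i hi => conjFrom_of_lt (Finset.mem_filter.1 hi).2 x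
  have hgt : sortedProd {i ∈ s | j < i} (conjFrom j x) =
      MulAut.conj (x j) (sortedProd {i ∈ s | j < i} x) :=
    (sortedProd_congr fun i hi => conjFrom_of_le (Finset.mem_filter.1 hi).2.le x).trans
      (map_sortedProd (MulAut.conj (x j)).toMonoidHom _ x).symm
  rw [sortedProd_eq_filter_lt_mul_filter_gt hj, sortedProd_insert hj, hlt, hgt,
    MulAut.conj_apply]
  group

end SortedProd

lemma foldr_conj_eq_conj_prod {ι G : Type*} [Group G] (x : ι → G) (l : List ι)
    (z : G) :
    l.foldr (fun i acc => x i * acc * (x i)⁻¹) z = MulAut.conj (l.map x).prod z := by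
  induction l with
  | nil => simp
  | cons i l ih =>
    rw [List.foldr_cons, ih, List.map_cons, List.prod_cons, map_mul, MulAut.mul_apply]
    rfl

/-- The values smaller than `σ k` that `σ` takes after position `k`; these index the entries that
act on `x (σ k)` in `yGroup σ x k`. -/
def smallerAfter {n : ℕ} (σ : Equiv.Perm (Fin n)) (k : Fin n) : Finset (Fin n) :=
  {i | k < σ.symm i ∧ i < σ k}

lemma mem_smallerAfter {n : ℕ} {σ : Equiv.Perm (Fin n)} {k i : Fin n} :
    i ∈ smallerAfter σ k ↔ k < σ.symm i ∧ i < σ k := by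
  simp [smallerAfter]

lemma apply_mem_smallerAfter {n : ℕ} {σ : Equiv.Perm (Fin n)} {k q : Fin n} :
    σ q ∈ smallerAfter σ k ↔ k < q ∧ σ q < σ k := by
  rw [mem_smallerAfter, Equiv.symm_apply_apply]

lemma apply_mem_smallerAfter_mul_swap {n : ℕ} {σ : Equiv.Perm (Fin n)} {a b k q : Fin n} :
    σ q ∈ smallerAfter (σ * Equiv.swap a b) k ↔
      k < Equiv.swap a b q ∧ σ q < σ (Equiv.swap a b k) := by
  simpa using apply_mem_smallerAfter (σ := σ * Equiv.swap a b) (k := k) (q := Equiv.swap a b q)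

lemma yGroup_eq_conj {G : Type*} [Group G] {n : ℕ} (σ : Equiv.Perm (Fin n)) (x : Fin n → G)
    (k : Fin n) : yGroup σ x k = MulAut.conj (sortedProd (smallerAfter σ k) x) (x (σ k)) :=
  foldr_conj_eq_conj_prod x _ _

section InsertPerm

variable {n : ℕ} (p j : Fin (n + 1)) (τ : Equiv.Perm (Fin n)) (k : Fin n)

/-- The permutation sending `p` to `j` and acting as `τ` between the complements of `p` and `j`,
each identified with `Fin n` by its increasing enumeration. -/
def insertPerm : Equiv.Perm (Fin (n + 1)) :=
  j.cycleRange.symm * Equiv.Perm.decomposeFin.symm (0, τ) * p.cycleRange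

lemma insertPerm_apply_self : insertPerm p j τ p = j := by
  simp [insertPerm]

lemma insertPerm_apply_succAbove : insertPerm p j τ (p.succAbove k) = j.succAbove (τ k) := by
  simp [insertPerm]

lemma insertPerm_symm_apply_self : (insertPerm p j τ).symm j = p := by
  rw [Equiv.symm_apply_eq, insertPerm_apply_self]

lemma insertPerm_symm_apply_succAbove :
    (insertPerm p j τ).symm (j.succAbove k) = p.succAbove (τ.symm k) := by
  rw [Equiv.symm_apply_eq, insertPerm_apply_succAbove, Equiv.apply_symm_apply]

lemma sign_insertPerm :
    (Equiv.Perm.sign (insertPerm p j τ) : ℤ) = (-1) ^ (p + j : ℕ) * Equiv.Perm.sign τ := by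
  simp only [insertPerm, Equiv.Perm.sign_mul, Equiv.Perm.sign_symm, Fin.sign_cycleRange,
    Equiv.Perm.decomposeFin.symm_sign, if_true, one_mul, Units.val_mul, Units.val_pow_eq_pow_val,
    Units.val_neg, Units.val_one]
  ring

lemma insertPerm_bijective :
    Function.Bijective fun jτ : Fin (n + 1) × Equiv.Perm (Fin n) => insertPerm p jτ.1 jτ.2 := by
  rw [Fintype.bijective_iff_injective_and_card]
  refine ⟨?_, by simp [Fintype.card_perm, Nat.factorial_succ]⟩
  rintro ⟨j, τ⟩ ⟨j', τ'⟩ h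
  obtain rfl : j = j' := by simpa only [insertPerm_apply_self] using Equiv.congr_fun h p
  obtain rfl : τ = τ' := Equiv.ext fun k => by
    simpa only [insertPerm_apply_succAbove, Fin.succAbove_right_inj] using
      Equiv.congr_fun h (p.succAbove k)
  rfl

lemma sum_sign_smul_eq_sum_insertPerm {A : Type*} [AddCommGroup A]
    (F : Equiv.Perm (Fin (n + 1)) → A) :
    ∑ σ, (Equiv.Perm.sign σ : ℤ) • F σ =
      ∑ j : Fin (n + 1), (-1 : ℤ) ^ (p + j : ℕ) •
        ∑ τ, (Equiv.Perm.sign τ : ℤ) • F (insertPerm p j τ) := by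
  rw [← (insertPerm_bijective p).sum_comp, Fintype.sum_prod_type]
  simp only [sign_insertPerm, mul_smul, Finset.smul_sum]

lemma smallerAfter_insertPerm_succAbove :
    smallerAfter (insertPerm p j τ) (p.succAbove k) =
      if p.succAbove k < p ∧ j < j.succAbove (τ k) then
        insert j ((smallerAfter τ k).map j.succAboveEmb)
      else (smallerAfter τ k).map j.succAboveEmb := by
  ext i
  obtain rfl | ⟨i, rfl⟩ := j.eq_self_or_eq_succAbove i
  · split_ifs <;>
      simp_all [mem_smallerAfter, insertPerm_symm_apply_self, insertPerm_apply_succAbove]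
  · split_ifs <;>
      simp [mem_smallerAfter, insertPerm_symm_apply_succAbove, insertPerm_apply_succAbove]

end InsertPerm

section OuterFaces

variable {G : Type*} [Group G] {n : ℕ} (j : Fin (n + 1)) (τ : Equiv.Perm (Fin n))
  (x : Fin (n + 1) → G)

lemma rackFace_true_eq_removeNth {X : Type*} (op : X → X → X) (y : Fin (n + 1) → X) :
    rackFace op true j y = j.removeNth y := by
  funext k
  simp only [rackFace, Fin.removeNth_apply, Fin.succAbove, Fin.lt_def, Fin.val_castSucc,
    if_true, apply_ite y]

lemma rackFace_false_eq_removeNth_conjFrom :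
    rackFace (fun x y : G => x * y * x⁻¹) false j x = j.removeNth (conjFrom j x) := by
  funext k
  by_cases hk : k.castSucc < j
  · rw [Fin.removeNth_apply, Fin.succAbove_of_castSucc_lt _ _ hk, conjFrom_of_lt hk]
    exact if_pos hk
  · have hjk : j ≤ k.castSucc := not_lt.1 hk
    rw [Fin.removeNth_apply, Fin.succAbove_of_le_castSucc _ _ hjk,
      conjFrom_of_le (hjk.trans Fin.castSucc_lt_succ.le)]
    exact if_neg hk

lemma yGroup_removeNth (k : Fin n) :
    yGroup τ (j.removeNth x) k =
      MulAut.conj (sortedProd ((smallerAfter τ k).map j.succAboveEmb) x)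
        (x (j.succAbove (τ k))) := by
  rw [yGroup_eq_conj, sortedProd_map (Fin.strictMono_succAbove j)]
  rfl

lemma removeNth_zero_yGroup_insertPerm (op : G → G → G) :
    (0 : Fin (n + 1)).removeNth (yGroup (insertPerm 0 j τ) x) =
      yGroup τ (rackFace op true j x) := by
  funext k
  rw [rackFace_true_eq_removeNth, yGroup_removeNth, Fin.removeNth_apply, yGroup_eq_conj,
    insertPerm_apply_succAbove, smallerAfter_insertPerm_succAbove, if_neg (by simp)]

lemma removeNth_last_yGroup_insertPerm :
    (Fin.last n).removeNth (yGroup (insertPerm (Fin.last n) j τ) x) =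
      yGroup τ (rackFace (fun x y : G => x * y * x⁻¹) false j x) := by
  funext k
  rw [rackFace_false_eq_removeNth_conjFrom, yGroup_removeNth, Fin.removeNth_apply, yGroup_eq_conj,
    insertPerm_apply_succAbove, smallerAfter_insertPerm_succAbove]
  set s := (smallerAfter τ k).map j.succAboveEmb with hs
  have hlast : (Fin.last n).succAbove k < Fin.last n := by simp [Fin.castSucc_lt_last]
  rcases (Fin.succAbove_ne j (τ k)).lt_or_gt with hlt | hgt
  · have hsj : ∀ i ∈ s, i < j := by
      simp only [hs, Finset.forall_mem_map]
      exact fun i hi => ((Fin.strictMono_succAbove j) (mem_smallerAfter.1 hi).2).trans hlt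
    rw [if_neg fun h => hlt.not_gt h.2, conjFrom_of_lt hlt,
      sortedProd_congr fun i hi => conjFrom_of_lt (hsj i hi) x]
  · have hj : j ∉ s := by simp [hs, Fin.succAbove_ne]
    rw [if_pos ⟨hlast, hgt⟩, ← sortedProd_conjFrom_mul hj, conjFrom_of_le hgt.le, map_mul,
      MulAut.mul_apply]

end OuterFaces

section InnerFaces

variable {n : ℕ} {σ : Equiv.Perm (Fin (n + 1))} {i : Fin n}

lemma smallerAfter_mul_swap_of_ne (σ : Equiv.Perm (Fin (n + 1))) {k : Fin (n + 1)}
    (hk : k ≠ i.castSucc) (hk' : k ≠ i.succ) :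
    smallerAfter (σ * Equiv.swap i.castSucc i.succ) k = smallerAfter σ k := by
  ext m
  obtain ⟨q, rfl⟩ := σ.surjective m
  rw [apply_mem_smallerAfter_mul_swap, apply_mem_smallerAfter]
  grind

lemma smallerAfter_mul_swap_succ (h : σ i.castSucc < σ i.succ) :
    smallerAfter (σ * Equiv.swap i.castSucc i.succ) i.succ = smallerAfter σ i.castSucc := by
  ext m
  obtain ⟨q, rfl⟩ := σ.surjective m
  rw [apply_mem_smallerAfter_mul_swap, apply_mem_smallerAfter]
  grind

lemma smallerAfter_mul_swap_castSucc (h : σ i.castSucc < σ i.succ) :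
    smallerAfter (σ * Equiv.swap i.castSucc i.succ) i.castSucc =
      insert (σ i.castSucc) (smallerAfter σ i.succ) := by
  ext m
  obtain ⟨q, rfl⟩ := σ.surjective m
  rw [apply_mem_smallerAfter_mul_swap, Finset.mem_insert, apply_mem_smallerAfter,
    σ.injective.eq_iff]
  grind

lemma smallerAfter_castSucc_eq_filter (h : σ i.castSucc < σ i.succ) :
    smallerAfter σ i.castSucc = {m ∈ smallerAfter σ i.succ | m < σ i.castSucc} := by
  ext m
  obtain ⟨q, rfl⟩ := σ.surjective m
  rw [Finset.mem_filter, apply_mem_smallerAfter, apply_mem_smallerAfter]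
  grind

variable {G : Type*} [Group G] (x : Fin (n + 1) → G)

lemma yGroup_mul_swap_of_ne (σ : Equiv.Perm (Fin (n + 1))) {k : Fin (n + 1)}
    (hk : k ≠ i.castSucc) (hk' : k ≠ i.succ) :
    yGroup (σ * Equiv.swap i.castSucc i.succ) x k = yGroup σ x k := by
  rw [yGroup_eq_conj, yGroup_eq_conj, smallerAfter_mul_swap_of_ne σ hk hk',
    Equiv.Perm.mul_apply, Equiv.swap_apply_of_ne_of_ne hk hk']

lemma yGroup_mul_swap_castSucc_mul_succ (h : σ i.castSucc < σ i.succ) :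
    yGroup (σ * Equiv.swap i.castSucc i.succ) x i.castSucc *
        yGroup (σ * Equiv.swap i.castSucc i.succ) x i.succ =
      yGroup σ x i.castSucc * yGroup σ x i.succ := by
  have hmem : σ i.castSucc ∉ smallerAfter σ i.succ := by
    simp [mem_smallerAfter, (Fin.castSucc_lt_succ (i := i)).le]
  simp only [yGroup_eq_conj, smallerAfter_mul_swap_succ h, smallerAfter_mul_swap_castSucc h,
    smallerAfter_castSucc_eq_filter h, sortedProd_insert_eq_conj_mul hmem,
    Equiv.Perm.mul_apply, Equiv.swap_apply_left, Equiv.swap_apply_right]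
  generalize MulAut.conj _ (x (σ i.castSucc)) = c
  simp [mul_assoc]

lemma contractNth_yGroup_mul_swap (σ : Equiv.Perm (Fin (n + 1))) (i : Fin n) :
    i.castSucc.contractNth (· * ·) (yGroup (σ * Equiv.swap i.castSucc i.succ) x) =
      i.castSucc.contractNth (· * ·) (yGroup σ x) := by
  wlog h : σ i.castSucc < σ i.succ generalizing σ
  · have hlt : σ i.succ < σ i.castSucc :=
      (not_lt.1 h).lt_of_ne (σ.injective.ne Fin.castSucc_lt_succ.ne')
    have := this (σ * Equiv.swap i.castSucc i.succ) (by simpa using hlt)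
    rwa [Equiv.mul_swap_mul_self, eq_comm] at this
  funext k
  by_cases hk : k = i
  · subst hk
    simp only [Fin.contractNth_apply_of_eq _ _ _ _ (Fin.val_castSucc k).symm,
      yGroup_mul_swap_castSucc_mul_succ x h]
  · have hval : (i.castSucc : ℕ) ≠ k := fun h => hk (Fin.ext h.symm)
    rw [Fin.contractNth_apply_of_ne _ _ _ _ hval, Fin.contractNth_apply_of_ne _ _ _ _ hval]
    refine yGroup_mul_swap_of_ne x σ (Fin.succAbove_ne _ _) ?_
    rwa [← Fin.succAbove_castSucc_self, Fin.succAbove_right_inj.ne]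

lemma sum_sign_smul_eq_zero_of_mul_swap {α A : Type*} [Fintype α] [DecidableEq α] [AddCommGroup A]
    {a b : α} (hab : a ≠ b) {F : Equiv.Perm α → A} (hF : ∀ σ, F (σ * Equiv.swap a b) = F σ) :
    ∑ σ, (Equiv.Perm.sign σ : ℤ) • F σ = 0 := by
  refine Finset.sum_involution (fun σ _ => σ * Equiv.swap a b) (fun σ _ => ?_) (fun σ _ _ h => ?_)
    (fun _ _ => Finset.mem_univ _) (fun σ _ => Equiv.mul_swap_mul_self a b σ)
  · simp [hF, Equiv.Perm.sign_swap hab]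
  · exact hab (Equiv.swap_eq_one_iff.1 (mul_eq_left.1 h))

end InnerFaces

section SMap

variable {G A : Type*} [Group G] [AddCommGroup A] {n : ℕ} (f : (Fin n → G) → A)
  (x : Fin (n + 1) → G)

lemma groupDiff_eq_sum_contractNth (y : Fin (n + 1) → G) :
    groupDiff f y = f ((0 : Fin (n + 1)).removeNth y) +
      ∑ i : Fin n, (-1 : ℤ) ^ ((i : ℕ) + 1) • f (i.castSucc.contractNth (· * ·) y) +
      (-1 : ℤ) ^ (n + 1) • f ((Fin.last n).removeNth y) := by
  simp only [Fin.removeNth_zero, Fin.removeNth_last]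
  rfl

lemma SMap_comp_removeNth_zero (op : G → G → G) :
    SMap (fun y => f ((0 : Fin (n + 1)).removeNth y)) x =
      ∑ j : Fin (n + 1), (-1 : ℤ) ^ (j : ℕ) • SMap f (rackFace op true j x) := by
  refine (sum_sign_smul_eq_sum_insertPerm 0 _).trans (Finset.sum_congr rfl fun j _ => ?_)
  simp only [removeNth_zero_yGroup_insertPerm j _ x op, Fin.val_zero, zero_add, SMap]

lemma SMap_comp_removeNth_last :
    SMap (fun y => f ((Fin.last n).removeNth y)) x =
      ∑ j : Fin (n + 1), (-1 : ℤ) ^ (n + j : ℕ) •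
        SMap f (rackFace (fun x y : G => x * y * x⁻¹) false j x) := by
  refine (sum_sign_smul_eq_sum_insertPerm (Fin.last n) _).trans
    (Finset.sum_congr rfl fun j _ => ?_)
  simp only [removeNth_last_yGroup_insertPerm, Fin.val_last, SMap]

lemma SMap_comp_contractNth (i : Fin n) :
    SMap (fun y => f (i.castSucc.contractNth (· * ·) y)) x = 0 :=
  sum_sign_smul_eq_zero_of_mul_swap Fin.castSucc_lt_succ.ne fun σ =>
    congrArg f (contractNth_yGroup_mul_swap x σ i)

lemma SMap_groupDiff :
    SMap (groupDiff f) x = SMap (fun y => f ((0 : Fin (n + 1)).removeNth y)) x +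
      ∑ i : Fin n, (-1 : ℤ) ^ ((i : ℕ) + 1) •
        SMap (fun y => f (i.castSucc.contractNth (· * ·) y)) x +
      (-1 : ℤ) ^ (n + 1) • SMap (fun y => f ((Fin.last n).removeNth y)) x := by
  simp only [SMap, groupDiff_eq_sum_contractNth, smul_add, Finset.smul_sum,
    Finset.sum_add_distrib, smul_comm _ ((-1 : ℤ) ^ _)]
  rw [Finset.sum_comm]

end SMap

/-- The maps `S^n` form a morphism of cochain complexes from the group
cochain complex of `G` to the rack cochain complex of `Conj(G)`:
`d_R ∘ S^n = S^{n+1} ∘ d_G`. -/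
theorem statement14 {G A : Type*} [Group G] [AddCommGroup A] (n : ℕ)
    (f : (Fin n → G) → A) :
    rackDiff (fun x y : G => x * y * x⁻¹) (SMap f) = SMap (groupDiff f) := by
  funext x
  rw [SMap_groupDiff, SMap_comp_removeNth_zero f x (fun x y : G => x * y * x⁻¹),
    SMap_comp_removeNth_last]
  simp only [SMap_comp_contractNth, smul_zero, Finset.sum_const_zero, add_zero]
  rw [Finset.smul_sum, ← Finset.sum_add_distrib]
  refine Finset.sum_congr rfl fun j _ => ?_
  have hsign : (-1 : ℤ) ^ (n + 1) * (-1) ^ (n + j : ℕ) = (-1) ^ ((j : ℕ) + 1) := by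
    rw [← pow_add, show n + 1 + (n + j) = 2 * n + (j + 1) by omega, pow_add, pow_mul]
    simp
  rw [smul_smul, hsign, smul_sub, pow_succ, mul_neg_one, neg_smul, neg_smul]
  abel
end
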